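/- Let n, m, p be positive integers, A ∈ ℤ^{p×(nm)}, b ∈ ℤ^p, u_{ij} ≥ 0, and let X = {z ∈ {0,1}^{n×m} : A z ≤ b} with T_i(z) = Σ_{j=1}^m u_{ij} z_{ij}. Let w_1 > w_2 > … > w_n > 0 and w'_max = max_{k∈[n]} w'_k. Suppose z̄ ∈ X maximizes the total weight Σ_{i=1}^n T_i(z) over X, write T̄_i = T_i(z̄), assume (after relabeling) T̄_1 ≥ T̄_2 ≥ … ≥ T̄_n and Σ_{i=1}^n T̄_i > 0. Then G_w(T̄_1,…,T̄_n) ≥ max( 2 w'_n / ((n+1) w'_max), n T̄_n / (Σ_{i=1}^n T̄_i) ) · sup_{z ∈ X} G_w(T_1(z),…,T_n(z)). -/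

import Mathlib

/-- The vector `v` rearranged in nondecreasing order. -/
noncomputable def sortedVec {n : ℕ} (v : Fin n → ℝ) : Fin n → ℝ := v ∘ Tuple.sort v

/-- Ordered weighted average: `OWA_w(v) = ∑ₖ w_k v↑_k`. -/
noncomputable def OWA {n : ℕ} (w v : Fin n → ℝ) : ℝ := ∑ k, w k * sortedVec v k

/-- `Lorenz v k` is the k-th Lorenz component, the sum of the k smallest components of v. -/
noncomputable def Lorenz {n : ℕ} (v : Fin n → ℝ) (k : ℕ) : ℝ :=
  ∑ i : Fin n, if (i : ℕ) < k then sortedVec v i else 0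

/-- `wprime w k = w_k - w_{k+1}` with the convention `w_{n+1} = 0` (0-indexed). -/
noncomputable def wprime {n : ℕ} (w : Fin n → ℝ) (k : Fin n) : ℝ :=
  w k - (if h : (k : ℕ) + 1 < n then w ⟨(k : ℕ) + 1, h⟩ else 0)

/-- Feasible set `X = {z ∈ {0,1}^{n×m} : A z ≤ b}`. -/
def Feasible {n m p : ℕ} (A : Matrix (Fin p) (Fin n × Fin m) ℤ) (b : Fin p → ℤ)
    (z : Fin n × Fin m → ℝ) : Prop :=
  (∀ ij, z ij = 0 ∨ z ij = 1) ∧ ∀ q, ∑ ij, (A q ij : ℝ) * z ij ≤ (b q : ℝ)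

/-- `Util u z i = T_i(z) = ∑ⱼ u_{ij} z_{ij}`. -/
def Util {n m : ℕ} (u : Fin n → Fin m → ℝ) (z : Fin n × Fin m → ℝ) (i : Fin n) : ℝ :=
  ∑ j, u i j * z (i, j)

/-!
Let `W = ∑ₖ w_k`. As `w` decreases while the sorted utilities increase, Chebyshev's sum inequality
bounds the ordered weighted average of any `T` by `W (∑ᵢ T_i) / n`, hence by `W (∑ᵢ T̄_i) / n` when
`T̄` has the larger total. On the other side, `OWA w T̄` is at least `w_n ∑ᵢ T̄_i` and at least
`W T̄_n`. The second bound gives the ratio `n T̄_n / ∑ᵢ T̄_i`; the first gives the other ratio,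
because summation by parts, `W = ∑ₖ k w'_k`, yields `2 W ≤ n (n + 1) w'_max`.
-/

section OrderedWeightedAverage

variable {n : ℕ} {w v S T : Fin n → ℝ} {c : ℝ}

theorem sum_sortedVec (v : Fin n → ℝ) : ∑ i, sortedVec v i = ∑ i, v i :=
  Equiv.sum_comp (Tuple.sort v) v

theorem card_mul_owa_le_sum_mul_sum (hw : Antitone w) (v : Fin n → ℝ) :
    (n : ℝ) * OWA w v ≤ (∑ k, w k) * ∑ i, v i := by
  have hanti : Antivary w (sortedVec v) := hw.antivary (Tuple.monotone_sort v)
  simpa only [OWA, Fintype.card_fin, sum_sortedVec] using hanti.card_mul_sum_le_sum_mul_sum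

theorem owa_le_of_sum_le (hn : 0 < n) (hw : Antitone w) (hw0 : ∀ k, 0 ≤ w k)
    (hsum : ∑ i, T i ≤ ∑ i, S i) : OWA w T ≤ (∑ k, w k) * (∑ i, S i) / n := by
  have hW : 0 ≤ ∑ k, w k := Finset.sum_nonneg fun k _ => hw0 k
  rw [le_div_iff₀' (Nat.cast_pos.mpr hn)]
  exact (card_mul_owa_le_sum_mul_sum hw T).trans (mul_le_mul_of_nonneg_left hsum hW)

theorem mul_sum_le_owa (hc : ∀ k, c ≤ w k) (hv : ∀ i, 0 ≤ v i) : c * ∑ i, v i ≤ OWA w v := by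
  rw [← sum_sortedVec v, Finset.mul_sum]
  exact Finset.sum_le_sum fun k _ => mul_le_mul_of_nonneg_right (hc k) (hv _)

theorem sum_mul_le_owa (hw0 : ∀ k, 0 ≤ w k) (hc : ∀ i, c ≤ v i) : (∑ k, w k) * c ≤ OWA w v := by
  rw [Finset.sum_mul]
  exact Finset.sum_le_sum fun k _ => mul_le_mul_of_nonneg_left (hc _) (hw0 k)

end OrderedWeightedAverage

section WeightDifferences

theorem sum_range_succ_mul_sub {R : Type*} [CommRing R] (f : ℕ → R) (n : ℕ) :
    ∑ k ∈ Finset.range n, ((k : R) + 1) * (f k - f (k + 1)) =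
      ∑ k ∈ Finset.range n, f k - n * f n := by
  induction n with
  | zero => simp
  | succ n ih =>
    rw [Finset.sum_range_succ, Finset.sum_range_succ, ih]
    push_cast
    ring

variable {n : ℕ} {w : Fin n → ℝ}

theorem sum_succ_mul_wprime (w : Fin n → ℝ) :
    ∑ k : Fin n, ((k : ℝ) + 1) * wprime w k = ∑ k, w k := by
  let f : ℕ → ℝ := fun k => if h : k < n then w ⟨k, h⟩ else 0
  have hf (k : Fin n) : f k = w k := dif_pos k.isLt
  have hfn : f n = 0 := dif_neg (lt_irrefl n)
  have hwprime (k : Fin n) : wprime w k = f k - f (k + 1) := by rw [hf]; rfl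
  calc ∑ k : Fin n, ((k : ℝ) + 1) * wprime w k
      = ∑ k ∈ Finset.range n, ((k : ℝ) + 1) * (f k - f (k + 1)) := by
        simp only [hwprime,
          Fin.sum_univ_eq_sum_range (fun k => ((k : ℝ) + 1) * (f k - f (k + 1))) n]
    _ = ∑ k ∈ Finset.range n, f k := by
        rw [sum_range_succ_mul_sub, hfn, mul_zero, sub_zero]
    _ = ∑ k, w k := by simp only [← Fin.sum_univ_eq_sum_range, hf]

theorem two_mul_sum_le_of_wprime_le {M : ℝ} (hM : ∀ k, wprime w k ≤ M) :
    2 * ∑ k, w k ≤ n * (n + 1) * M := by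
  have gauss : 2 * ∑ k : Fin n, ((k : ℝ) + 1) = n * (n + 1) := by
    rw [Fin.sum_univ_eq_sum_range (fun k => (k : ℝ) + 1) n]
    have h := Finset.sum_range_id_mul_two (n + 1)
    rw [Finset.sum_range_succ', add_zero, add_tsub_cancel_right] at h
    rw [mul_comm, mul_comm (n : ℝ)]
    exact_mod_cast h
  calc 2 * ∑ k, w k = 2 * ∑ k : Fin n, ((k : ℝ) + 1) * wprime w k := by rw [sum_succ_mul_wprime]
    _ ≤ 2 * ∑ k : Fin n, ((k : ℝ) + 1) * M := by gcongr with k; exact hM k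
    _ = n * (n + 1) * M := by rw [← Finset.sum_mul, ← mul_assoc, gauss]

theorem wprime_last (w : Fin n → ℝ) (hn : 0 < n) :
    wprime w ⟨n - 1, by omega⟩ = w ⟨n - 1, by omega⟩ := by
  simp [wprime, Nat.sub_add_cancel hn]

end WeightDifferences

section ApproximationRatios

variable {n : ℕ} {w S T : Fin n → ℝ} {c M : ℝ}

theorem two_mul_div_mul_owa_le_owa (hn : 0 < n) (hw : Antitone w) (hc : ∀ k, c ≤ w k)
    (hc0 : 0 ≤ c) (hM : ∀ k, wprime w k ≤ M) (hM0 : 0 < M) (hS : ∀ i, 0 ≤ S i)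
    (hsum : ∑ i, T i ≤ ∑ i, S i) :
    2 * c / ((n + 1) * M) * OWA w T ≤ OWA w S := by
  have : (n : ℝ) ≠ 0 := Nat.cast_ne_zero.mpr hn.ne'
  have htotal : 0 ≤ ∑ i, S i := Finset.sum_nonneg fun i _ => hS i
  calc 2 * c / ((n + 1) * M) * OWA w T
      ≤ 2 * c / ((n + 1) * M) * ((∑ k, w k) * (∑ i, S i) / n) := by
        gcongr
        exact owa_le_of_sum_le hn hw (fun k => hc0.trans (hc k)) hsum
    _ = 2 * (∑ k, w k) / (n * (n + 1) * M) * (c * ∑ i, S i) := by field_simp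
    _ ≤ c * ∑ i, S i := by
        refine mul_le_of_le_one_left (mul_nonneg hc0 htotal) ?_
        exact div_le_one_of_le₀ (two_mul_sum_le_of_wprime_le hM) (by positivity)
    _ ≤ OWA w S := mul_sum_le_owa hc hS

theorem card_mul_div_sum_mul_owa_le_owa (hn : 0 < n) (hw : Antitone w) (hw0 : ∀ k, 0 ≤ w k)
    (hc : ∀ i, c ≤ S i) (hc0 : 0 ≤ c) (hpos : 0 < ∑ i, S i) (hsum : ∑ i, T i ≤ ∑ i, S i) :
    n * c / (∑ i, S i) * OWA w T ≤ OWA w S := by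
  have : (n : ℝ) ≠ 0 := Nat.cast_ne_zero.mpr hn.ne'
  calc n * c / (∑ i, S i) * OWA w T
      ≤ n * c / (∑ i, S i) * ((∑ k, w k) * (∑ i, S i) / n) := by
        gcongr
        exact owa_le_of_sum_le hn hw hw0 hsum
    _ = (∑ k, w k) * c := by field_simp
    _ ≤ OWA w S := sum_mul_le_owa hw0 hc

theorem stmt1_general (hn : 0 < n) (hw : Antitone w) (hwpos : ∀ k, 0 < w k)
    (hS : ∀ i, 0 ≤ S i) {i₀ : Fin n} (hmin : ∀ i, S i₀ ≤ S i) (hpos : 0 < ∑ i, S i)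
    (hsum : ∑ i, T i ≤ ∑ i, S i) :
    max (2 * wprime w ⟨n - 1, by omega⟩ /
          (((n : ℝ) + 1) *
            Finset.univ.sup' (Finset.univ_nonempty_iff.mpr ⟨⟨0, hn⟩⟩) (wprime w)))
        ((n : ℝ) * S i₀ / (∑ i, S i)) * OWA w T ≤ OWA w S := by
  have hM (k : Fin n) := Finset.le_sup' (wprime w) (Finset.mem_univ k)
  have hlast : 0 < wprime w ⟨n - 1, by omega⟩ := by
    rw [wprime_last w hn]
    exact hwpos _
  have hlast_le (k : Fin n) : wprime w ⟨n - 1, by omega⟩ ≤ w k := by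
    rw [wprime_last w hn]
    exact hw (Nat.le_pred_of_lt k.isLt)
  refine max_rec' (fun ratio => ratio * OWA w T ≤ OWA w S) ?_ ?_
  · exact two_mul_div_mul_owa_le_owa hn hw hlast_le hlast.le hM (hlast.trans_le (hM _)) hS hsum
  · exact card_mul_div_sum_mul_owa_le_owa hn hw (fun k => (hwpos k).le) hmin (hS i₀) hpos hsum

end ApproximationRatios

section Utilities

variable {n m p : ℕ} {z : Fin n × Fin m → ℝ}

theorem Feasible.nonneg {A : Matrix (Fin p) (Fin n × Fin m) ℤ} {b : Fin p → ℤ}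
    (hz : Feasible A b z) (ij : Fin n × Fin m) : 0 ≤ z ij := by
  rcases hz.1 ij with h | h <;> simp [h]

theorem util_nonneg {u : Fin n → Fin m → ℝ} (hu : ∀ i j, 0 ≤ u i j) (hz : ∀ ij, 0 ≤ z ij)
    (i : Fin n) : 0 ≤ Util u z i :=
  Finset.sum_nonneg fun j _ => mul_nonneg (hu i j) (hz (i, j))

end Utilities

/-- Theorem 2, approximation ratio: if `z̄` maximizes the total weight
`∑ᵢ T_i(z)` over `X`, with `T̄_1 ≥ … ≥ T̄_n` and `∑ᵢ T̄_i > 0`, then the GGI value of `z̄`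
is at least `max(2w'_n/((n+1)w'_max), n T̄_n / ∑ᵢ T̄_i)` times the optimal GGI value. -/
theorem stmt1 {n m p : ℕ} (hn : 0 < n) (hm : 0 < m) (hp : 0 < p)
    (A : Matrix (Fin p) (Fin n × Fin m) ℤ) (b : Fin p → ℤ)
    (u : Fin n → Fin m → ℝ) (hu : ∀ i j, 0 ≤ u i j)
    (w : Fin n → ℝ) (hw : StrictAnti w) (hwpos : ∀ k, 0 < w k)
    (zbar : Fin n × Fin m → ℝ) (hzbar : Feasible A b zbar)
    (hmaxwt : ∀ z, Feasible A b z → ∑ i, Util u z i ≤ ∑ i, Util u zbar i)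
    (hsorted : ∀ i j : Fin n, i ≤ j → Util u zbar j ≤ Util u zbar i)
    (hpos : 0 < ∑ i, Util u zbar i) :
    ∀ z, Feasible A b z →
      max (2 * wprime w ⟨n - 1, by omega⟩ /
            (((n : ℝ) + 1) *
              Finset.univ.sup' (Finset.univ_nonempty_iff.mpr ⟨⟨0, hn⟩⟩) (wprime w)))
          ((n : ℝ) * Util u zbar ⟨n - 1, by omega⟩ / (∑ i, Util u zbar i)) *
        OWA w (Util u z) ≤ OWA w (Util u zbar) := by
  exact fun z hz => stmt1_general hn hw.antitone hwpos (util_nonneg hu hzbar.nonneg)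
    (fun i => hsorted i _ (Nat.le_pred_of_lt i.isLt)) hpos (hmaxwt z hz)
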